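/- For any complex symmetric n×n matrix S there exists a unitary matrix U such that U S Uᵀ is diagonal with real non-negative entries (Takagi factorization). -/

import Mathlib

open Matrix

/-- A symmetric antilinear map has a unit con-eigenvector in each nonzero invariant subspace. -/
theorem conEig {E : Type*} [NormedAddCommGroup E] [InnerProductSpace ℂ E] [FiniteDimensional ℂ E]
    (T : E →ₛₗ[starRingEnd ℂ] E) (hT : ∀ x y, inner ℂ (T x) y = inner ℂ (T y) x)
    (W : Submodule ℂ E) (hW : W ≠ ⊥) (hTW : ∀ x ∈ W, T x ∈ W) :
    ∃ u ∈ W, ‖u‖ = 1 ∧ ∃ d : ℝ, 0 ≤ d ∧ T u = (d : ℂ) • u := by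
  -- it suffices to find a nonzero vector
  suffices h : ∃ u ∈ W, u ≠ 0 ∧ ∃ d : ℝ, 0 ≤ d ∧ T u = (d : ℂ) • u by
    obtain ⟨u, hu, hu0, d, hd, hTu⟩ := h
    refine ⟨((‖u‖⁻¹ : ℝ) : ℂ) • u, W.smul_mem _ hu, ?_, d, hd, ?_⟩
    · rw [norm_smul, Complex.norm_real, norm_inv, norm_norm]
      exact inv_mul_cancel₀ (norm_ne_zero_iff.2 hu0)
    · rw [LinearMap.map_smulₛₗ, hTu, Complex.conj_ofReal, smul_comm]
  let Q : E →ₗ[ℂ] E := T.comp T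
  have hQ : ∀ x ∈ W, Q x ∈ W := fun x hx => hTW _ (hTW _ hx)
  haveI : Nontrivial W := Submodule.nontrivial_iff_ne_bot.2 hW
  obtain ⟨μ, hμ⟩ := Module.End.exists_eigenvalue (Q.restrict hQ)
  obtain ⟨x, hx⟩ := hμ.exists_hasEigenvector
  have hx0 : (x : E) ≠ 0 := fun h => hx.2 (Subtype.ext h)
  have hQx : T (T (x : E)) = μ • (x : E) := congrArg Subtype.val hx.apply_eq_smul
  obtain ⟨x, hxW⟩ := x
  simp only at hx0 hQx
  have hn : ‖x‖ ≠ 0 := norm_ne_zero_iff.2 hx0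
  -- the eigenvalue is a square
  have hμ2 : μ = (((‖T x‖ / ‖x‖) : ℝ) : ℂ) * (((‖T x‖ / ‖x‖) : ℝ) : ℂ) := by
    have h1 : inner ℂ (T (T x)) x = inner ℂ (T x) (T x) := hT _ _
    rw [hQx, inner_smul_left, inner_self_eq_norm_sq_to_K, inner_self_eq_norm_sq_to_K] at h1
    have h2 := congrArg (starRingEnd ℂ) h1
    simp at h2
    have hn' : (‖x‖ : ℂ) ≠ 0 := by exact_mod_cast hn
    push_cast
    field_simp
    exact h2
  set σ : ℝ := ‖T x‖ / ‖x‖ with hσ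
  have hσ0 : 0 ≤ σ := by positivity
  by_cases hy : T x + (σ : ℂ) • x = 0
  · refine ⟨Complex.I • x, W.smul_mem _ hxW, smul_ne_zero Complex.I_ne_zero hx0, σ, hσ0, ?_⟩
    rw [LinearMap.map_smulₛₗ, eq_neg_of_add_eq_zero_left hy, Complex.conj_I, smul_comm]
    simp
  · refine ⟨_, W.add_mem (hTW _ hxW) (W.smul_mem _ hxW), hy, σ, hσ0, ?_⟩
    rw [map_add, LinearMap.map_smulₛₗ, hQx, hμ2, Complex.conj_ofReal, smul_add, smul_smul, add_comm]

/-- Orthonormal families of con-eigenvectors of every length up to the dimension. -/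
theorem conFamily {E : Type*} [NormedAddCommGroup E] [InnerProductSpace ℂ E]
    [FiniteDimensional ℂ E]
    (T : E →ₛₗ[starRingEnd ℂ] E) (hT : ∀ x y, inner ℂ (T x) y = inner ℂ (T y) x)
    (k : ℕ) (hk : k ≤ Module.finrank ℂ E) :
    ∃ v : Fin k → E, Orthonormal ℂ v ∧ ∃ d : Fin k → ℝ, ∀ i, 0 ≤ d i ∧ T (v i) = (d i : ℂ) • v i := by
  induction k with
  | zero => exact ⟨Fin.elim0, ⟨fun i => i.elim0, fun i => i.elim0⟩, Fin.elim0, fun i => i.elim0⟩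
  | succ k ih =>
    obtain ⟨v, hv, d, hd⟩ := ih (by omega)
    let K := Submodule.span ℂ (Set.range v)
    have hK : Module.finrank ℂ K = k := by
      simpa using finrank_span_eq_card hv.linearIndependent
    have hW : Kᗮ ≠ ⊥ := by
      intro h
      have := K.finrank_add_finrank_orthogonal
      rw [h, hK, finrank_bot] at this
      omega
    have hmem : ∀ x, x ∈ Kᗮ ↔ ∀ i, inner ℂ (v i) x = 0 := by
      intro x
      constructor
      · intro h i
        exact h _ (Submodule.subset_span ⟨i, rfl⟩)
      · intro h
        have : K ≤ (ℂ ∙ x)ᗮ := by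
          rw [Submodule.span_le]
          rintro _ ⟨i, rfl⟩
          exact Submodule.mem_orthogonal_singleton_iff_inner_left.2 (h i)
        intro y hy
        exact Submodule.mem_orthogonal_singleton_iff_inner_left.1 (this hy)
    obtain ⟨u, hu, hu1, e, he, hTu⟩ := conEig T hT Kᗮ hW (by
      intro x hx
      rw [hmem] at hx ⊢
      intro i
      rw [← inner_conj_symm, hT, (hd i).2, inner_smul_left, hx i]
      simp)
    rw [hmem] at hu
    refine ⟨Fin.cons u v, ?_, Fin.cons e d, ?_⟩
    · constructor
      · intro i
        refine Fin.cases ?_ (fun i => ?_) i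
        · simpa using hu1
        · simpa using hv.1 i
      · intro i j
        refine Fin.cases ?_ (fun i => ?_) i <;> refine Fin.cases ?_ (fun j => ?_) j
        · simp
        · intro _
          simpa using inner_eq_zero_symm.1 (hu j)
        · intro _
          simpa using hu i
        · intro h
          simpa using hv.2 (fun h' => h (by rw [h']))
    · intro i
      refine Fin.cases ?_ (fun i => ?_) i
      · simpa using ⟨he, hTu⟩
      · simpa using hd i

/-- Takagi factorization: every complex symmetric matrix `S` can be written
as `U S Uᵀ = diagonal`, with `U` unitary and the diagonal entries real non-negative. -/
theorem stmt3 (n : ℕ) (S : Matrix (Fin n) (Fin n) ℂ) (hS : Sᵀ = S) :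
    ∃ U ∈ Matrix.unitaryGroup (Fin n) ℂ, ∃ d : Fin n → ℝ,
      (∀ i, 0 ≤ d i) ∧ U * S * Uᵀ = Matrix.diagonal (fun i => (d i : ℂ)) := by
  let T : EuclideanSpace ℂ (Fin n) →ₛₗ[starRingEnd ℂ] EuclideanSpace ℂ (Fin n) :=
    { toFun := fun x => WithLp.toLp 2 (fun i => ∑ j, S i j * star (x j))
      map_add' := by
        intro x y
        ext i
        simp [mul_add, Finset.sum_add_distrib]
      map_smul' := by
        intro c x
        ext i
        simp only [PiLp.smul_apply, smul_eq_mul, Finset.mul_sum, star_mul']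
        refine Finset.sum_congr rfl fun j _ => ?_
        rw [starRingEnd_apply]
        ring }
  have hTa : ∀ x i, T x i = ∑ j, S i j * star (x j) := fun x i => rfl
  have hS' : ∀ i j, S i j = S j i := fun i j => congrFun (congrFun hS j) i
  have hT : ∀ x y, inner ℂ (T x) y = inner ℂ (T y) x := by
    intro x y
    simp only [PiLp.inner_apply, RCLike.inner_apply, hTa, map_sum, map_mul, Finset.mul_sum]
    rw [Finset.sum_comm]
    refine Finset.sum_congr rfl fun i _ => Finset.sum_congr rfl fun j _ => ?_
    rw [hS' i j]
    simp
    ring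
  obtain ⟨v, hv, d, hd⟩ := conFamily T hT n (by simp)
  have hU : (Matrix.of fun i j => star (v i j)) * (Matrix.of fun i j => star (v i j))ᴴ
      = (1 : Matrix (Fin n) (Fin n) ℂ) := by
    ext i j
    have h := orthonormal_iff_ite.1 hv i j
    rw [Matrix.one_apply, ← h]
    simp [Matrix.mul_apply, PiLp.inner_apply, mul_comm]
  refine ⟨Matrix.of fun i j => star (v i j), Matrix.mem_unitaryGroup_iff.2 hU, d,
    fun i => (hd i).1, ?_⟩
  have hSV : S * (Matrix.of fun i j => star (v i j))ᵀ
      = (Matrix.of fun i j => star (v i j))ᴴ * Matrix.diagonal (fun i => (d i : ℂ)) := by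
    ext i j
    have h := congrArg (fun z : EuclideanSpace ℂ (Fin n) => z i) (hd j).2
    simp only [hTa] at h
    rw [Matrix.mul_diagonal, Matrix.mul_apply]
    simp only [Matrix.transpose_apply, Matrix.of_apply, Matrix.conjTranspose_apply, star_star]
    rw [h]
    simp [mul_comm]
  rw [Matrix.mul_assoc, hSV, ← Matrix.mul_assoc, hU, Matrix.one_mul]
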